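/- Let f ∈ O_3 be an isolated singularity with Γ^2(f) = ∅ (the Newton boundary has no 2-dimensional compact faces). Then Γ^1(f) consists of exactly one segment I, and I belongs to the family J = {I_j^k : j=1,2,3, k≥2} where I_1^k = [(0,1,1),(k,0,0)], I_2^k = [(1,0,1),(0,k,0)], I_3^k = [(1,1,0),(0,0,k)]. -/

import Mathlib

/-!
# Isolated surface singularities without two-dimensional compact faces

Let `A` be the support of `f`. Because the zero of `∇f` is isolated, `A` comes within distance one
of every axis (`near_axis`): otherwise `∇f` vanishes along an axis. It also meets every coordinate
plane `νᵢ = 0` (`meets_plane`): otherwise `f = zᵢ g` with `g 0 = 0`, and `∇f` vanishes on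
`zᵢ = g = 0`, which is not a point since zeros of holomorphic functions of two variables are never
isolated (`exists_nonisolated_zero`). All exponents in `A` have order at least two
(`two_le_order`).

The rest is combinatorics of the minimizers on `A` of strictly positive weights `u`. The compact
face of `u` is the convex hull of these minimizers (`faceOf_eq`), so the absence of two-dimensional
compact faces says that no positive weight has three non-collinear minimizers
(`noTriangle_of_gamma`). If `v ≠ w` are minimal for a common positive weight, then moving `u`
inside the wall `⟨u, v - w⟩ = 0` can never meet a third, non-collinear minimizer, so `v` and `w`
are minimal on the whole wall, including its intersection with the boundary of the octant
(`minAt_of_wt_eq`). Testing boundary weights of the wall against the points of `A` near the axes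
and on the coordinate planes leaves only `{v, w} = {k eᵢ, (1,1,1) - eᵢ}` with `k ≥ 2`
(`classify`). Two different such pairs cannot coexist (`unique_pair`), and there is at least one,
because a point minimal for all positive weights lies below all of `A` and so is the origin
(`exists_pair`).
-/

open Finset Filter Topology

/-- The `i`-th partial derivative of `f`. -/
noncomputable def pder {n : ℕ} (i : Fin n) (f : (Fin n → ℂ) → ℂ) : (Fin n → ℂ) → ℂ :=
  fun z => fderiv ℂ f z (Pi.single i 1)

/-- The iterated partial derivative `∂^ν f` for a multi-index `ν`. -/
noncomputable def mder {n : ℕ} (ν : Fin n → ℕ) (f : (Fin n → ℂ) → ℂ) : (Fin n → ℂ) → ℂ :=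
  ((List.finRange n).map fun i => (pder i)^[ν i]).foldr (fun g acc => g acc) f

/-- The support of the Taylor expansion of `f` at `0`. -/
def NSupp {n : ℕ} (f : (Fin n → ℂ) → ℂ) : Set (Fin n → ℕ) :=
  {ν | mder ν f 0 ≠ 0}

/-- The Taylor coefficient `a_ν` of `f` at `0`. -/
noncomputable def coeffOf {n : ℕ} (f : (Fin n → ℂ) → ℂ) (ν : Fin n → ℕ) : ℂ :=
  mder ν f 0 / ((∏ i, (ν i).factorial : ℕ) : ℂ)

/-- The Newton diagram `Γ₊(f)`: the convex hull of `⋃_{ν ∈ supp f} (ν + ℝ₊ⁿ)`. -/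
def NDiag {n : ℕ} (f : (Fin n → ℂ) → ℂ) : Set (Fin n → ℝ) :=
  convexHull ℝ {x | ∃ ν ∈ NSupp f, ∀ i, (ν i : ℝ) ≤ x i}

/-- `l(u, A) = inf {⟨u, v⟩ : v ∈ A}`. -/
noncomputable def ell {n : ℕ} (u : Fin n → ℝ) (A : Set (Fin n → ℝ)) : ℝ :=
  sInf ((fun v => ∑ i, u i * v i) '' A)

/-- The face `Δ(u, A) = {v ∈ A : ⟨u, v⟩ = l(u, A)}`. -/
def faceOf {n : ℕ} (u : Fin n → ℝ) (A : Set (Fin n → ℝ)) : Set (Fin n → ℝ) :=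
  {v | v ∈ A ∧ ∑ i, u i * v i = ell u A}

/-- `S` is a compact face of the Newton diagram of `f` (member of the Newton boundary). -/
def IsCompactFace {n : ℕ} (f : (Fin n → ℂ) → ℂ) (S : Set (Fin n → ℝ)) : Prop :=
  ∃ u : Fin n → ℝ, (∀ i, 0 < u i) ∧ S = faceOf u (NDiag f)

/-- The dimension of a face, as the rank of the direction of its affine span. -/
noncomputable def faceDim {n : ℕ} (S : Set (Fin n → ℝ)) : ℕ :=
  Module.finrank ℝ (affineSpan ℝ S).direction

/-- `Γ^k(f)`: the `k`-dimensional compact faces of the Newton boundary of `f`. -/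
def GammaK {n : ℕ} (f : (Fin n → ℂ) → ℂ) (k : ℕ) : Set (Set (Fin n → ℝ)) :=
  {S | IsCompactFace f S ∧ faceDim S = k}

/-- The quasihomogeneous polynomial `f_S = Σ_{ν ∈ S} a_ν z^ν`. -/
noncomputable def facePoly {n : ℕ} (f : (Fin n → ℂ) → ℂ) (S : Set (Fin n → ℝ)) :
    (Fin n → ℂ) → ℂ :=
  fun z => ∑' ν : {ν : Fin n → ℕ // (fun i => (ν i : ℝ)) ∈ S}, coeffOf f ν.1 * ∏ i, z i ^ ν.1 i

/-- `f` is nondegenerate in the Kouchnirenko sense. -/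
def Nondeg {n : ℕ} (f : (Fin n → ℂ) → ℂ) : Prop :=
  ∀ S, IsCompactFace f S →
    ¬∃ z : Fin n → ℂ, (∀ i, z i ≠ 0) ∧ ∀ i, pder i (facePoly f S) z = 0

/-- `f` is a singularity: a nonzero holomorphic germ with `f 0 = 0`, `∇f 0 = 0`. -/
def IsSing {n : ℕ} (f : (Fin n → ℂ) → ℂ) : Prop :=
  AnalyticAt ℂ f 0 ∧ (¬∀ᶠ z in 𝓝 0, f z = 0) ∧ f 0 = 0 ∧ ∀ i, pder i f 0 = 0

/-- `f` is an isolated singularity: `∇f` has an isolated zero at `0`. -/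
def IsIsolSing {n : ℕ} (f : (Fin n → ℂ) → ℂ) : Prop :=
  IsSing f ∧ ∃ r > (0 : ℝ), ∀ z : Fin n → ℂ, ‖z‖ < r → z ≠ 0 → ∃ i, pder i f z ≠ 0

/-- Euclidean distance of a point of `ℝ³` to the `i`-th coordinate axis. -/
noncomputable def distAxis (i : Fin 3) (W : Fin 3 → ℝ) : ℝ :=
  Real.sqrt (∑ j ∈ Finset.univ.erase i, (W j) ^ 2)

/-- The vertices (0-dimensional compact faces of the Newton boundary of `f`) lying in `S`. -/
def vtxOf (f : (Fin 3 → ℂ) → ℂ) (S : Set (Fin 3 → ℝ)) : Set (Fin 3 → ℝ) :=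
  {A | IsCompactFace f {A} ∧ A ∈ S}

/-- `S` is an exceptional face with respect to the axis `OX_i`: one of its vertices `W` is
at distance `1` from `OX_i` and the remaining vertices constitute a `1`-dimensional face
lying in a coordinate plane containing `OX_i`. -/
def ExcWrt (f : (Fin 3 → ℂ) → ℂ) (i : Fin 3) (S : Set (Fin 3 → ℝ)) : Prop :=
  ∃ W ∈ vtxOf f S, distAxis i W = 1 ∧
    ∃ T ∈ GammaK f 1, (∃ j, j ≠ i ∧ T ⊆ {x : Fin 3 → ℝ | x j = 0}) ∧
      vtxOf f T = vtxOf f S \ {W}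

/-- The set `E_f` of exceptional 2-dimensional faces of `f`. -/
def Ef (f : (Fin 3 → ℂ) → ℂ) : Set (Set (Fin 3 → ℝ)) :=
  {S | S ∈ GammaK f 2 ∧ ∃ i, ExcWrt f i S}

/-- `I` is the segment `I_j^m` of the family `𝒥` for the given `m`. -/
def segJ (m : ℕ) (I : Set (Fin 3 → ℝ)) : Prop :=
  I = segment ℝ ![0, 1, 1] ![(m : ℝ), 0, 0] ∨
  I = segment ℝ ![1, 0, 1] ![0, (m : ℝ), 0] ∨
  I = segment ℝ ![1, 1, 0] ![0, 0, (m : ℝ)]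

/-- `I` belongs to the family `𝒥 = {I_j^k : j = 1,2,3, k ≥ 2}`. -/
def InJ (I : Set (Fin 3 → ℝ)) : Prop := ∃ m : ℕ, 2 ≤ m ∧ segJ m I

/-! ### Minimizers of positive weights on a set of exponents -/

/-- The pairing `⟨u, v⟩` of a real weight vector with an integral exponent. -/
noncomputable def wt (u : Fin 3 → ℝ) (v : Fin 3 → ℕ) : ℝ := ∑ i, u i * (v i : ℝ)

/-- `v` is a point of `A` at which the weight `u` is minimal on `A`. -/
def MinAt (A : Set (Fin 3 → ℕ)) (u : Fin 3 → ℝ) (v : Fin 3 → ℕ) : Prop :=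
  v ∈ A ∧ ∀ x ∈ A, wt u v ≤ wt u x

/-- No strictly positive weight has three non-collinear minimizers on `A`. Non-collinearity of
`v, w, x` is witnessed by a functional `u'` that is constant on `{v, w}` and smaller at `x`. -/
def NoTriangle (A : Set (Fin 3 → ℕ)) : Prop :=
  ∀ u u' : Fin 3 → ℝ, ∀ v w x : Fin 3 → ℕ, (∀ i, 0 < u i) → MinAt A u v → MinAt A u w →
    MinAt A u x → v ≠ w → wt u' v = wt u' w → wt u' x < wt u' v → False

theorem sum_distinct {i j k : Fin 3} (hij : i ≠ j) (hik : i ≠ k) (hjk : j ≠ k) (g : Fin 3 → ℝ) :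
    ∑ l, g l = g i + g j + g k := by
  rw [Fin.sum_univ_three]
  fin_cases i <;> fin_cases j <;> fin_cases k <;> simp_all <;> ring

theorem exists_third (i j : Fin 3) : ∃ k, i ≠ k ∧ j ≠ k := by
  revert i j; decide

theorem eq_of_distinct {i j k : Fin 3} (hij : i ≠ j) (hik : i ≠ k) (hjk : j ≠ k) (l : Fin 3) :
    l = i ∨ l = j ∨ l = k := by
  fin_cases i <;> fin_cases j <;> fin_cases k <;> fin_cases l <;> simp_all

theorem wt_lerp (u u' : Fin 3 → ℝ) (t : ℝ) (v : Fin 3 → ℕ) :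
    wt (fun i => u i + t * u' i) v = wt u v + t * wt u' v := by
  simp only [wt, Finset.mul_sum, ← Finset.sum_add_distrib]
  exact Finset.sum_congr rfl fun i _ => by ring

/-- A strictly positive weight has finite sublevel sets on `ℕ³`. -/
theorem finite_wt_lt {u : Fin 3 → ℝ} (hu : ∀ i, 0 < u i) (C : ℝ) :
    {x : Fin 3 → ℕ | wt u x < C}.Finite := by
  refine (Set.finite_Iic (fun i => ⌈C / u i⌉₊)).subset fun x hx i => ?_
  have h1 : u i * (x i : ℝ) ≤ wt u x :=
    Finset.single_le_sum (f := fun i => u i * (x i : ℝ))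
      (fun j _ => mul_nonneg (hu j).le (Nat.cast_nonneg _)) (Finset.mem_univ i)
  have h2 : (x i : ℝ) ≤ C / u i := by
    rw [le_div_iff₀ (hu i)]
    have : wt u x < C := hx
    linarith [mul_comm (u i) (x i : ℝ)]
  exact_mod_cast h2.trans (Nat.le_ceil _)

theorem exists_minAt {A : Set (Fin 3 → ℕ)} (hA : A.Nonempty) {u : Fin 3 → ℝ}
    (hu : ∀ i, 0 < u i) : ∃ v, MinAt A u v := by
  obtain ⟨a, ha⟩ := hA
  by_cases h : ({x : Fin 3 → ℕ | wt u x < wt u a} ∩ A).Nonempty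
  · obtain ⟨v, hv, hmin⟩ := Set.exists_min_image _ (wt u)
      ((finite_wt_lt hu (wt u a)).subset Set.inter_subset_left) h
    refine ⟨v, hv.2, fun x hx => ?_⟩
    by_cases hxa : wt u x < wt u a
    · exact hmin x ⟨hxa, hx⟩
    · have : wt u v < wt u a := hv.1
      linarith
  · refine ⟨a, ha, fun x hx => ?_⟩
    by_contra hlt
    exact h ⟨x, not_le.mp hlt, hx⟩

/-- The first wall met when moving from `u₀`, where `v` is minimal, towards `u₁`, where it is
not: some weight `u` on the segment has `v` and a further point `x` among its minimizers, and `x`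
is one of the points that beat `v` at `u₁`. -/
theorem exists_wall {A : Set (Fin 3 → ℕ)} {u₀ u₁ : Fin 3 → ℝ} (h₀ : ∀ i, 0 < u₀ i)
    (h₁ : ∀ i, 0 < u₁ i) {v y : Fin 3 → ℕ} (hv : MinAt A u₀ v) (hy : y ∈ A)
    (hlt : wt u₁ y < wt u₁ v) :
    ∃ u x, ∃ r s : ℝ, (∀ i, 0 < u i) ∧ (∀ z, wt u z = r * wt u₀ z + s * wt u₁ z) ∧
      MinAt A u v ∧ MinAt A u x ∧ wt u₁ x < wt u₁ v := by
  -- `T x` is the slope `s` for which `v` and `x` have equal weight with respect to `u₀ + s u₁`.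
  let T : (Fin 3 → ℕ) → ℝ := fun x => (wt u₀ x - wt u₀ v) / (wt u₁ v - wt u₁ x)
  obtain ⟨x, hx, hmin⟩ := Set.exists_min_image ({x : Fin 3 → ℕ | wt u₁ x < wt u₁ v} ∩ A) T
    ((finite_wt_lt h₁ _).subset Set.inter_subset_left) ⟨y, hlt, hy⟩
  have hxlt : wt u₁ x < wt u₁ v := hx.1
  have hT0 : 0 ≤ T x := div_nonneg (sub_nonneg.2 (hv.2 x hx.2)) (by linarith)
  have hTx : wt u₀ x + T x * wt u₁ x = wt u₀ v + T x * wt u₁ v := by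
    have : T x * (wt u₁ v - wt u₁ x) = wt u₀ x - wt u₀ v :=
      div_mul_cancel₀ _ (by linarith)
    linarith
  have key : ∀ z ∈ A, wt u₀ v + T x * wt u₁ v ≤ wt u₀ z + T x * wt u₁ z := by
    intro z hz
    by_cases hzl : wt u₁ z < wt u₁ v
    · have h1 : T x ≤ T z := hmin z ⟨hzl, hz⟩
      have h2 : T z * (wt u₁ v - wt u₁ z) = wt u₀ z - wt u₀ v :=
        div_mul_cancel₀ _ (by linarith)
      nlinarith
    · have := hv.2 z hz
      nlinarith
  refine ⟨fun i => u₀ i + T x * u₁ i, x, 1, T x, fun i => ?_, fun z => ?_, ⟨hv.1, fun z hz => ?_⟩,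
    ⟨hx.2, fun z hz => ?_⟩, hxlt⟩
  · have := mul_nonneg hT0 (h₁ i).le
    linarith [h₀ i]
  · rw [wt_lerp]; ring
  · simpa only [wt_lerp] using key z hz
  · simpa only [wt_lerp, hTx] using key z hz

/-- Without triangles, two points that are minimal together for one positive weight are minimal
for every nonnegative weight that does not separate them. -/
theorem minAt_of_wt_eq {A : Set (Fin 3 → ℕ)} (hA : NoTriangle A) {u₀ u : Fin 3 → ℝ}
    (h₀ : ∀ i, 0 < u₀ i) {v w : Fin 3 → ℕ} (hv : MinAt A u₀ v) (hw : MinAt A u₀ w) (hvw : v ≠ w)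
    (hu : ∀ i, 0 ≤ u i) (he : wt u v = wt u w) : MinAt A u v := by
  have he₀ : wt u₀ v = wt u₀ w := le_antisymm (hv.2 w hw.1) (hw.2 v hv.1)
  have pos : ∀ u₁ : Fin 3 → ℝ, (∀ i, 0 < u₁ i) → wt u₁ v = wt u₁ w → MinAt A u₁ v := by
    intro u₁ h₁ he₁
    refine ⟨hv.1, fun y hy => ?_⟩
    by_contra hlt
    obtain ⟨u', x, r, s, hpos, hlin, hv', hx', hxl⟩ := exists_wall h₀ h₁ hv hy (not_le.mp hlt)
    have hw' : MinAt A u' w := ⟨hw.1, fun z hz => by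
      have := hv'.2 z hz
      rw [hlin v, he₀, he₁, ← hlin w] at this
      exact this⟩
    exact hA u' u₁ v w x hpos hv' hw' hx' hvw he₁ hxl
  refine ⟨hv.1, fun y hy => ?_⟩
  -- The boundary case follows by letting `ε → 0` in the positive weights `u + ε u₀`.
  have hε : ∀ ε : ℝ, 0 < ε → wt u v + ε * wt u₀ v ≤ wt u y + ε * wt u₀ y := by
    intro ε hε
    have := (pos (fun i => u i + ε * u₀ i)
      (fun i => by have := mul_pos hε (h₀ i); linarith [hu i])
      (by rw [wt_lerp, wt_lerp, he, he₀])).2 y hy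
    simpa only [wt_lerp] using this
  have hy₀ := hv.2 y hy
  by_contra hlt
  rw [not_le] at hlt
  have h3 := hε ((wt u v - wt u y) / (2 * (wt u₀ y - wt u₀ v + 1))) (by
    apply div_pos <;> linarith)
  set D := wt u₀ y - wt u₀ v with hD
  have h4 : (wt u v - wt u y) / (2 * (D + 1)) * D ≤ (wt u v - wt u y) / 2 := by
    rw [div_mul_eq_mul_div, div_le_div_iff₀ (by linarith) (by norm_num)]
    nlinarith
  nlinarith

/-- One coordinate plane of the classification: `x + y ≤ 1` bounds the right side of `h1` by
`max a b`, while its left side is at least `b * a`, so one of `a`, `b` equals `1`. -/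
theorem arith_half {a b p q x y : ℤ} (ha : 0 < a) (hb : 0 < b) (hpa : a ≤ p) (hq : 0 ≤ q)
    (hx : 0 ≤ x) (hy : 0 ≤ y) (hxy : x + y ≤ 1) (h1 : b * p + a * q ≤ b * x + a * y) :
    (p = 1 ∧ a = 1 ∧ q = 0) ∨ (b = 1 ∧ p = a ∧ q = 0) := by
  have h5 : b * a ≤ b * p := mul_le_mul_of_nonneg_left hpa hb.le
  have h6 : 0 ≤ a * q := mul_nonneg ha.le hq
  have hba : 0 < b * a := mul_pos hb ha
  obtain ⟨rfl, rfl⟩ | ⟨rfl, rfl⟩ | ⟨rfl, rfl⟩ :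
      (x = 0 ∧ y = 0) ∨ (x = 1 ∧ y = 0) ∨ (x = 0 ∧ y = 1) := by omega
  · exfalso; linarith
  · left
    have hp : p ≤ 1 := by
      by_contra h
      have : b * 2 ≤ b * p := mul_le_mul_of_nonneg_left (by omega) hb.le
      linarith
    obtain rfl : p = 1 := by omega
    refine ⟨rfl, by omega, ?_⟩
    have : a * q = 0 := by linarith
    rcases mul_eq_zero.1 this with h | h
    · omega
    · exact h
  · right
    have hb1 : b ≤ 1 := by
      by_contra h
      have : 2 * a ≤ b * a := mul_le_mul_of_nonneg_right (by omega) ha.le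
      linarith
    obtain rfl : b = 1 := by omega
    have : a * q = 0 := by linarith
    refine ⟨rfl, by linarith, ?_⟩
    rcases mul_eq_zero.1 this with h | h
    · omega
    · exact h

/-- The arithmetic core of the classification. In coordinates `(i, j, k)` the two endpoints are
`(p, q, r)` and `(p - a, q + b, r + c)`. Comparing with a point at distance at most `1` from an axis
bounds the weights `(b, a, 0)` and `(c, 0, a)`, and all solutions other than
`(a, 0, 0), (0, 1, 1)` have an endpoint of order at most `1`. -/
theorem arith_key {a b c p q r x y x' z' : ℤ} (ha : 0 < a) (hb : 0 ≤ b) (hc : 0 ≤ c)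
    (hbc : 0 < b ∨ 0 < c) (hpa : a ≤ p) (hq : 0 ≤ q) (hr : 0 ≤ r) (hs : 2 ≤ p + q + r)
    (hs' : 2 ≤ (p - a) + (q + b) + (r + c))
    (hx : 0 ≤ x) (hy : 0 ≤ y) (hxy : x + y ≤ 1) (hx' : 0 ≤ x') (hz' : 0 ≤ z')
    (hxz : x' + z' ≤ 1) (h1 : b * p + a * q ≤ b * x + a * y)
    (h2 : c * p + a * r ≤ c * x' + a * z') (h3 : b = 0 → q = 0) (h4 : c = 0 → r = 0) :
    2 ≤ a ∧ b = 1 ∧ c = 1 ∧ p = a ∧ q = 0 ∧ r = 0 := by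
  have hB := fun h => arith_half ha h hpa hq hx hy hxy h1
  have hC := fun h => arith_half ha h hpa hr hx' hz' hxz h2
  omega

theorem wt_three {i j k : Fin 3} (hij : i ≠ j) (hik : i ≠ k) (hjk : j ≠ k) (a b c : ℝ)
    (x : Fin 3 → ℕ) :
    wt (fun l => if l = i then a else if l = j then b else c) x = a * x i + b * x j + c * x k := by
  rw [wt, sum_distinct hij hik hjk]
  simp [hij.symm, hik.symm, hjk.symm]

theorem sum_distinct_nat {i j k : Fin 3} (hij : i ≠ j) (hik : i ≠ k) (hjk : j ≠ k)
    (g : Fin 3 → ℕ) : ∑ l, g l = g i + g j + g k := by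
  have := sum_distinct hij hik hjk (fun l => (g l : ℝ))
  exact_mod_cast this

/-- The classification when `i` is the only coordinate in which `v` exceeds `w`. The weights
`(w j - v j) eᵢ + (v i - w i) e_j`, its analogue for `k`, and `e_j`, `e_k` when they do not
separate `v` and `w`, all lie on the closed wall where `v` is minimal. -/
theorem classify_aux {A : Set (Fin 3 → ℕ)} (hA : NoTriangle A)
    (hax : ∀ i, ∃ x ∈ A, ∑ j ∈ Finset.univ.erase i, x j ≤ 1) (hpl : ∀ i, ∃ x ∈ A, x i = 0)
    (hord : ∀ x ∈ A, 2 ≤ ∑ i, x i) {u₀ : Fin 3 → ℝ}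
    (h₀ : ∀ i, 0 < u₀ i) {v w : Fin 3 → ℕ} (hv : MinAt A u₀ v) (hw : MinAt A u₀ w) {i j k : Fin 3}
    (hij : i ≠ j) (hik : i ≠ k) (hjk : j ≠ k) (hi : w i < v i) (hj : v j ≤ w j) (hk : v k ≤ w k) :
    2 ≤ v i ∧ w i = 0 ∧ v j = 0 ∧ w j = 1 ∧ v k = 0 ∧ w k = 1 := by
  have hvw : v ≠ w := fun h => by rw [h] at hi; exact lt_irrefl _ hi
  have hi' : (w i : ℝ) < v i := by exact_mod_cast hi
  have hj' : (v j : ℝ) ≤ w j := by exact_mod_cast hj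
  have hk' : (v k : ℝ) ≤ w k := by exact_mod_cast hk
  -- Each choice of nonnegative weights orthogonal to `v - w` gives an inequality on all of `A`.
  have key : ∀ a b c : ℝ, 0 ≤ a → 0 ≤ b → 0 ≤ c →
      a * v i + b * v j + c * v k = a * w i + b * w j + c * w k →
      ∀ x ∈ A, a * v i + b * v j + c * v k ≤ a * x i + b * x j + c * x k := by
    intro a b c ha hb hc he x hx
    have := (minAt_of_wt_eq (u := fun l => if l = i then a else if l = j then b else c) hA h₀ hv hw
      hvw (fun l => by split_ifs <;> assumption)
      (by rw [wt_three hij hik hjk, wt_three hij hik hjk]; exact he)).2 x hx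
    rwa [wt_three hij hik hjk, wt_three hij hik hjk] at this
  obtain ⟨x, hxA, hx⟩ := hax k
  obtain ⟨x', hxA', hx'⟩ := hax j
  have hx1 : x i + x j ≤ 1 := by
    have := Finset.add_sum_erase Finset.univ x (Finset.mem_univ k)
    have := sum_distinct_nat hij hik hjk x
    omega
  have hx1' : x' i + x' k ≤ 1 := by
    have := Finset.add_sum_erase Finset.univ x' (Finset.mem_univ j)
    have := sum_distinct_nat hij hik hjk x'
    omega
  have hov := hord v hv.1
  have how := hord w hw.1
  rw [sum_distinct_nat hij hik hjk] at hov how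
  have h1 := key (w j - v j) (v i - w i) 0 (by linarith) (by linarith) le_rfl (by ring) x hxA
  have h2 := key (w k - v k) 0 (v i - w i) (by linarith) le_rfl (by linarith) (by ring) x' hxA'
  have h3 : w j = v j → v j = 0 := by
    intro h
    obtain ⟨y, hyA, hy⟩ := hpl j
    have := key 0 1 0 le_rfl zero_le_one le_rfl (by simp [h]) y hyA
    simpa [hy] using this
  have h4 : w k = v k → v k = 0 := by
    intro h
    obtain ⟨y, hyA, hy⟩ := hpl k
    have := key 0 0 1 le_rfl le_rfl zero_le_one (by simp [h]) y hyA
    simpa [hy] using this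
  have hbc : v j < w j ∨ v k < w k := by
    by_contra h
    have e1 : v j = w j := by omega
    have e2 : v k = w k := by omega
    have e := le_antisymm (hv.2 w hw.1) (hw.2 v hv.1)
    rw [wt, wt, sum_distinct hij hik hjk, sum_distinct hij hik hjk, e1, e2] at e
    have := mul_lt_mul_of_pos_left hi' (h₀ i)
    linarith
  have h1z : ((w j : ℤ) - v j) * v i + (v i - w i) * v j
      ≤ ((w j : ℤ) - v j) * x i + (v i - w i) * x j := by
    have : ((w j : ℝ) - v j) * v i + (v i - w i) * v j
      ≤ ((w j : ℝ) - v j) * x i + (v i - w i) * x j := by linarith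
    exact_mod_cast this
  have h2z : ((w k : ℤ) - v k) * v i + (v i - w i) * v k
      ≤ ((w k : ℤ) - v k) * x' i + (v i - w i) * x' k := by
    have : ((w k : ℝ) - v k) * v i + (v i - w i) * v k
      ≤ ((w k : ℝ) - v k) * x' i + (v i - w i) * x' k := by linarith
    exact_mod_cast this
  have := arith_key (a := (v i : ℤ) - w i) (b := (w j : ℤ) - v j) (c := (w k : ℤ) - v k)
    (p := v i) (q := v j) (r := v k) (by omega) (by omega) (by omega) (by omega) (by omega)
    (by omega) (by omega) (by omega) (by omega) (x := x i) (y := x j) (x' := x' i) (z' := x' k)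
    (by omega) (by omega) (by omega) (by omega) (by omega) (by omega) h1z h2z (by omega) (by omega)
  omega

/-- `v` and `w` are the endpoints `k eᵢ` and `(1,1,1) - eᵢ` of a segment of the family `𝒥`. -/
def JPair (i : Fin 3) (k : ℕ) (v w : Fin 3 → ℕ) : Prop :=
  2 ≤ k ∧ v = Pi.single i k ∧ w = fun l => if l = i then 0 else 1

/-- Two points that are minimal for a common positive weight are the endpoints of a segment of
`𝒥`: the difference `v - w` has both signs, so up to exchanging the points exactly one coordinate
of `v - w` is positive. -/
theorem classify {A : Set (Fin 3 → ℕ)} (hA : NoTriangle A)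
    (hax : ∀ i, ∃ x ∈ A, ∑ j ∈ Finset.univ.erase i, x j ≤ 1) (hpl : ∀ i, ∃ x ∈ A, x i = 0)
    (hord : ∀ x ∈ A, 2 ≤ ∑ i, x i) {u₀ : Fin 3 → ℝ}
    (h₀ : ∀ i, 0 < u₀ i) {v w : Fin 3 → ℕ} (hv : MinAt A u₀ v) (hw : MinAt A u₀ w)
    (hvw : v ≠ w) : ∃ i k, JPair i k v w ∨ JPair i k w v := by
  have aux : ∀ {v w : Fin 3 → ℕ}, MinAt A u₀ v → MinAt A u₀ w → ∀ {i j k : Fin 3},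
      i ≠ j → i ≠ k → j ≠ k → w i < v i → v j ≤ w j → v k ≤ w k → ∃ i k, JPair i k v w := by
    intro v w hv hw i j k hij hik hjk hi hj hk
    obtain ⟨h1, h2, h3, h4, h5, h6⟩ :=
      classify_aux hA hax hpl hord h₀ hv hw hij hik hjk hi hj hk
    refine ⟨i, v i, h1, funext fun l => ?_, funext fun l => ?_⟩ <;>
      rcases eq_of_distinct hij hik hjk l with rfl | rfl | rfl <;>
      simp [*, Ne.symm hij, Ne.symm hik]
  have main : ∀ {v w : Fin 3 → ℕ}, MinAt A u₀ v → MinAt A u₀ w → v ≠ w →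
      ∃ i, w i < v i := by
    intro v w hv hw hvw
    by_contra! h
    refine hvw (funext fun l => ?_)
    have e := le_antisymm (hv.2 w hw.1) (hw.2 v hv.1)
    have := (Finset.sum_eq_sum_iff_of_le (s := Finset.univ) fun i _ =>
      mul_le_mul_of_nonneg_left (Nat.cast_le (α := ℝ).2 (h i)) (h₀ i).le).1 e l (Finset.mem_univ l)
    exact_mod_cast mul_left_cancel₀ (h₀ l).ne' this
  obtain ⟨i, hi⟩ := main hv hw hvw
  obtain ⟨j, hj⟩ := main hw hv hvw.symm
  have hij : i ≠ j := by rintro rfl; omega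
  obtain ⟨k, hik, hjk⟩ : ∃ k, i ≠ k ∧ j ≠ k := exists_third i j
  rcases le_total (v k) (w k) with hk | hk
  · obtain ⟨i, k, h⟩ := aux hv hw hij hik hjk hi hj.le hk
    exact ⟨i, k, .inl h⟩
  · obtain ⟨i, k, h⟩ := aux hw hv hij.symm hjk hik hj hi.le hk
    exact ⟨i, k, .inr h⟩

/-- Some positive weight has two minimizers. Otherwise the same point is minimal for all
positive weights, hence lies below all of `A`, and so is the origin. -/
theorem exists_pair {A : Set (Fin 3 → ℕ)} (hpl : ∀ i, ∃ x ∈ A, x i = 0)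
    (hord : ∀ x ∈ A, 2 ≤ ∑ i, x i) : ∃ u v w, (∀ i, 0 < u i) ∧ MinAt A u v ∧ MinAt A u w ∧
      v ≠ w := by
  obtain ⟨x₀, hx₀, -⟩ := hpl 0
  obtain ⟨v, hv⟩ := exists_minAt (A := A) ⟨x₀, hx₀⟩ (u := fun _ => 1) (fun _ => one_pos)
  obtain ⟨i, hi⟩ : ∃ i, v i ≠ 0 := by
    by_contra! h
    have := hord v hv.1
    simp [h] at this
  obtain ⟨y, hyA, hy⟩ := hpl i
  -- A weight concentrated on the `i`-th coordinate prefers `y`.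
  let u : Fin 3 → ℝ := fun l => (if l = i then (1 : ℝ) + ∑ m, (y m : ℝ) else 0) + 1 * 1
  have hs : (0 : ℝ) ≤ ∑ m, (y m : ℝ) := Finset.sum_nonneg fun _ _ => Nat.cast_nonneg _
  have hwt : ∀ z, wt u z = (1 + ∑ m, (y m : ℝ)) * z i + ∑ m, (z m : ℝ) := by
    intro z
    rw [show wt u z = _ from wt_lerp _ (fun _ => 1) 1 z]
    simp [wt, ite_mul]
  obtain ⟨u', x, r, s, hpos, -, hv', hx', hl⟩ := exists_wall (fun _ => one_pos)
    (u₁ := u) (fun l => by dsimp only [u]; split_ifs <;> linarith) hv hyA (by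
      rw [hwt, hwt, hy]
      have h1 : (1 : ℝ) ≤ v i := by exact_mod_cast Nat.one_le_iff_ne_zero.2 hi
      have h2 : (0 : ℝ) ≤ ∑ m, (v m : ℝ) := Finset.sum_nonneg fun _ _ => Nat.cast_nonneg _
      push_cast
      nlinarith)
  exact ⟨u', v, x, hpos, hv', hx', fun h => by rw [h] at hl; exact lt_irrefl _ hl⟩

/-- At most one segment of `𝒥` occurs. Two segments on the same axis have the same length by
minimality; if `(1,1,1) - e_{i'}` lies in `A` for `i' ≠ i`, it violates minimality of `k eᵢ` for
the weight with entries `1`, `k - 1/2` and `1/2` at `i`, `i'` and the third index. -/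
theorem unique_pair {A : Set (Fin 3 → ℕ)} (hA : NoTriangle A) {u u' : Fin 3 → ℝ}
    (hu : ∀ i, 0 < u i) (hu' : ∀ i, 0 < u' i) {v w v' w' : Fin 3 → ℕ} (hv : MinAt A u v)
    (hw : MinAt A u w) (hv' : MinAt A u' v') (hw' : MinAt A u' w') {i i' : Fin 3} {k k' : ℕ}
    (hJ : JPair i k v w) (hJ' : JPair i' k' v' w') : v = v' ∧ w = w' := by
  obtain ⟨hk, rfl, rfl⟩ := hJ
  obtain ⟨hk', rfl, rfl⟩ := hJ'
  by_cases hii : i = i'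
  · subst hii
    have h1 := hv.2 _ hv'.1
    have h2 := hv'.2 _ hv.1
    have hs : ∀ (u : Fin 3 → ℝ) (k : ℕ), wt u (Pi.single i k) = u i * k := by
      intro u k
      simp [wt, Pi.single_apply]
    rw [hs, hs, mul_le_mul_iff_right₀ (hu i)] at h1
    rw [hs, hs, mul_le_mul_iff_right₀ (hu' i)] at h2
    have : k = k' := by exact_mod_cast le_antisymm h1 h2
    simp [this]
  · exfalso
    obtain ⟨j, hij, hij'⟩ : ∃ j, i ≠ j ∧ i' ≠ j := exists_third i i'
    have hk2 : (2 : ℝ) ≤ k := by exact_mod_cast hk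
    have hne : (Pi.single i k : Fin 3 → ℕ) ≠ fun l => if l = i then 0 else 1 := by
      intro h
      have := congrFun h i
      simp at this
      omega
    have := (minAt_of_wt_eq
      (u := fun l => if l = i then 1 else if l = i' then (k : ℝ) - 1 / 2 else 1 / 2) hA hu hv hw
      hne (fun l => by split_ifs <;> linarith) (by
        rw [wt_three hii hij hij', wt_three hii hij hij']
        simp [Ne.symm hii, Ne.symm hij])).2 _ hw'.1
    rw [wt_three hii hij hij', wt_three hii hij hij'] at this
    simp [hii, Ne.symm hii, Ne.symm hij, Ne.symm hij'] at this
    linarith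

/-! ### Faces of the Newton diagram as hulls of minimizers -/

/-- An exponent regarded as a point of `ℝ³`. -/
def toR (v : Fin 3 → ℕ) : Fin 3 → ℝ := fun i => v i

theorem toR_injective : Function.Injective toR := fun _ _ h =>
  funext fun i => Nat.cast_injective (R := ℝ) (congrFun h i)

/-- The linear functional `⟨u, ·⟩` on `ℝ³`. -/
noncomputable def pair (u : Fin 3 → ℝ) : (Fin 3 → ℝ) →ₗ[ℝ] ℝ := ∑ i, u i • LinearMap.proj i

theorem pair_apply (u x : Fin 3 → ℝ) : pair u x = ∑ i, u i * x i := by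
  simp [pair]

theorem pair_toR (u : Fin 3 → ℝ) (v : Fin 3 → ℕ) : pair u (toR v) = wt u v := by
  rw [pair_apply]; rfl

/-- A compact face is the convex hull of the minimizers of its weight on the support. -/
theorem faceOf_eq {f : (Fin 3 → ℂ) → ℂ} {u : Fin 3 → ℝ} (hu : ∀ i, 0 < u i)
    {v : Fin 3 → ℕ} (hv : MinAt (NSupp f) u v) :
    faceOf u (NDiag f) = convexHull ℝ (toR '' {w | MinAt (NSupp f) u w}) := by
  set M := convexHull ℝ (toR '' {w | MinAt (NSupp f) u w}) with hM
  have hmin : ∀ w, MinAt (NSupp f) u w → wt u w = wt u v := fun w hw =>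
    le_antisymm (hw.2 v hv.1) (hv.2 w hw.1)
  have hMeq : ∀ x ∈ M, pair u x = wt u v := by
    intro x hx
    refine convexHull_min (t := {x | pair u x = wt u v}) ?_
      (convex_hyperplane (pair u).isLinear _) hx
    rintro _ ⟨w, hw, rfl⟩
    exact (pair_toR u w).trans (hmin w hw)
  -- The set `K` is convex and contains the generators, so contains the whole diagram.
  have hK : NDiag f ⊆ {x | wt u v < pair u x ∨ x ∈ M} := by
    refine convexHull_min ?_ ?_
    · rintro x ⟨ν, hν, hνx⟩
      have h1 : wt u ν ≤ pair u x := by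
        rw [pair_apply]
        exact Finset.sum_le_sum fun i _ => mul_le_mul_of_nonneg_left (hνx i) (hu i).le
      rcases (hv.2 ν hν).lt_or_eq with h | h
      · exact .inl (h.trans_le h1)
      rcases h1.lt_or_eq with h' | h'
      · exact .inl (h.trans_lt h')
      right
      have hx : x = toR ν := by
        rw [pair_apply] at h'
        have := (Finset.sum_eq_sum_iff_of_le (s := Finset.univ) fun i _ =>
          mul_le_mul_of_nonneg_left (hνx i) (hu i).le).1 h'
        exact funext fun i => (mul_left_cancel₀ (hu i).ne' (this i (Finset.mem_univ i))).symm
      rw [hx]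
      exact subset_convexHull ℝ _ ⟨ν, ⟨hν, fun y hy => h ▸ hv.2 y hy⟩, rfl⟩
    · intro x hx y hy a b ha hb hab
      have hlin : pair u (a • x + b • y) = a * pair u x + b * pair u y := by simp
      rcases ha.eq_or_lt with rfl | ha
      · obtain rfl : b = 1 := by linarith
        simpa using hy
      rcases hb.eq_or_lt with rfl | hb
      · obtain rfl : a = 1 := by linarith
        simpa using hx
      have ge : ∀ z, (wt u v < pair u z ∨ z ∈ M) → wt u v ≤ pair u z := by
        rintro z (h | h)
        · exact h.le
        · exact (hMeq z h).ge
      have hc : wt u v = a * wt u v + b * wt u v := by rw [← add_mul, hab, one_mul]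
      rcases hx with hx | hx
      · left
        rw [hlin, hc]
        exact add_lt_add_of_lt_of_le (mul_lt_mul_of_pos_left hx ha)
          (mul_le_mul_of_nonneg_left (ge y hy) hb.le)
      rcases hy with hy | hy
      · left
        rw [hlin, hc]
        exact add_lt_add_of_le_of_lt (mul_le_mul_of_nonneg_left (hMeq x hx).ge ha.le)
          (mul_lt_mul_of_pos_left hy hb)
      · exact .inr (convex_convexHull ℝ _ hx hy ha.le hb.le hab)
  have hMN : M ⊆ NDiag f := by
    refine convexHull_mono ?_
    rintro _ ⟨w, hw, rfl⟩
    exact ⟨w, hw.1, fun i => le_rfl⟩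
  have hvM : toR v ∈ M := subset_convexHull ℝ _ ⟨v, hv, rfl⟩
  have hell : ell u (NDiag f) = wt u v := by
    refine IsLeast.csInf_eq ⟨⟨toR v, hMN hvM, rfl⟩, ?_⟩
    rintro _ ⟨x, hx, rfl⟩
    rcases hK hx with h | h
    · simpa only [pair_apply] using h.le
    · simpa only [pair_apply] using (hMeq x h).ge
  ext x
  constructor
  · rintro ⟨hx, hxe⟩
    rw [hell, ← pair_apply] at hxe
    exact (hK hx).resolve_left fun h => h.ne' hxe
  · intro hx
    exact ⟨hMN hx, by rw [hell, ← pair_apply]; exact hMeq x hx⟩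

theorem faceDim_singleton (p : Fin 3 → ℝ) : faceDim ({p} : Set (Fin 3 → ℝ)) = 0 := by
  rw [faceDim, direction_affineSpan, vectorSpan_singleton, finrank_bot]

theorem faceDim_segment {p q : Fin 3 → ℝ} (h : p ≠ q) : faceDim (segment ℝ p q) = 1 := by
  rw [faceDim, ← convexHull_pair, affineSpan_convexHull, direction_affineSpan, vectorSpan_pair]
  exact finrank_span_singleton (by simpa [sub_eq_zero] using h)

/-- Three non-collinear minimizers span a face of dimension two: the face lies in a plane
`⟨u, ·⟩ = const`, and the differences of the points are independent. -/
theorem noTriangle_of_gamma {f : (Fin 3 → ℂ) → ℂ} (h2 : GammaK f 2 = ∅) :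
    NoTriangle (NSupp f) := by
  intro u u' v w x hu hv hw hx hvw he hlt
  suffices h : faceDim (faceOf u (NDiag f)) = 2 by
    have : faceOf u (NDiag f) ∈ GammaK f 2 := ⟨⟨u, hu, rfl⟩, h⟩
    rw [h2] at this
    exact this
  have hdir : (affineSpan ℝ (faceOf u (NDiag f))).direction
      = vectorSpan ℝ (toR '' {w | MinAt (NSupp f) u w}) := by
    rw [faceOf_eq hu hv, affineSpan_convexHull, direction_affineSpan]
  rw [faceDim, hdir]
  set V := vectorSpan ℝ (toR '' {w | MinAt (NSupp f) u w}) with hV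
  have hle : V ≤ LinearMap.ker (pair u) := by
    rw [hV, vectorSpan_def, Submodule.span_le]
    rintro _ ⟨_, ⟨a, ha, rfl⟩, _, ⟨b, hb, rfl⟩, rfl⟩
    have : wt u a = wt u b := le_antisymm (ha.2 b hb.1) (hb.2 a ha.1)
    simp [pair_toR, this]
  have hlt3 : Module.finrank ℝ V < 3 := by
    have hne : V < ⊤ := by
      refine lt_top_iff_ne_top.2 fun h => ?_
      have h0 : (fun i => u i) ∈ LinearMap.ker (pair u) := hle (h ▸ Submodule.mem_top)
      rw [LinearMap.mem_ker, pair_apply] at h0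
      have : 0 < ∑ i, u i * u i := Finset.sum_pos (fun i _ => mul_pos (hu i) (hu i)) ⟨0, by simp⟩
      linarith
    simpa using Submodule.finrank_lt hne.ne
  have hwm : toR w - toR v ∈ V := vsub_mem_vectorSpan ℝ ⟨w, hw, rfl⟩ ⟨v, hv, rfl⟩
  have hxm : toR x - toR v ∈ V := vsub_mem_vectorSpan ℝ ⟨x, hx, rfl⟩ ⟨v, hv, rfl⟩
  have hind : LinearIndependent ℝ ![toR w - toR v, toR x - toR v] := by
    rw [LinearIndependent.pair_iff]
    intro s t hst
    have h1 := congrArg (pair u') hst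
    simp only [map_add, map_smul, map_sub, map_zero, pair_toR, smul_eq_mul, he, sub_self,
      mul_zero, zero_add] at h1
    have ht : t = 0 := (mul_eq_zero.1 h1).resolve_right (by linarith)
    subst ht
    rw [zero_smul, add_zero] at hst
    refine ⟨(smul_eq_zero.1 hst).resolve_right ?_, rfl⟩
    rw [sub_eq_zero]
    exact fun h => hvw (toR_injective h).symm
  have hge : 2 ≤ Module.finrank ℝ V := by
    have hle' : Submodule.span ℝ (Set.range ![toR w - toR v, toR x - toR v]) ≤ V := by
      rw [Submodule.span_le]
      rintro _ ⟨i, rfl⟩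
      fin_cases i
      · exact hwm
      · exact hxm
    have := Submodule.finrank_mono hle'
    rwa [finrank_span_eq_card hind, Fintype.card_fin] at this
  omega

theorem inJ_of_jPair {i : Fin 3} {k : ℕ} {v w : Fin 3 → ℕ} (h : JPair i k v w) :
    InJ (segment ℝ (toR v) (toR w)) := by
  obtain ⟨hk, rfl, rfl⟩ := h
  refine ⟨k, hk, ?_⟩
  rw [segment_symm]
  fin_cases i
  · left
    congr 1 <;> ext l <;> fin_cases l <;> simp [toR]
  · right; left
    congr 1 <;> ext l <;> fin_cases l <;> simp [toR]
  · right; right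
    congr 1 <;> ext l <;> fin_cases l <;> simp [toR]

/-- The combinatorial form of the theorem, for any function whose support comes within distance
one of every axis, meets every coordinate plane, and has order at least two. -/
theorem gamma_one_of_support {f : (Fin 3 → ℂ) → ℂ} (h2 : GammaK f 2 = ∅)
    (hax : ∀ i, ∃ x ∈ NSupp f, ∑ j ∈ Finset.univ.erase i, x j ≤ 1)
    (hpl : ∀ i, ∃ x ∈ NSupp f, x i = 0) (hord : ∀ x ∈ NSupp f, 2 ≤ ∑ i, x i) :
    ∃ I, InJ I ∧ GammaK f 1 = {I} := by
  have hA := noTriangle_of_gamma h2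
  have hne : ∀ {i k v w}, JPair i k v w → v ≠ w := by
    rintro i k v w ⟨hk, rfl, rfl⟩ h
    have := congrFun h i
    simp at this
    omega
  have pairs : ∀ {u v w}, (∀ i, 0 < u i) → MinAt (NSupp f) u v → MinAt (NSupp f) u w → v ≠ w →
      ∃ i k v' w', JPair i k v' w' ∧ MinAt (NSupp f) u v' ∧ MinAt (NSupp f) u w' := by
    intro u v w hu hv hw hvw
    obtain ⟨i, k, h | h⟩ := classify hA hax hpl hord hu hv hw hvw
    · exact ⟨i, k, v, w, h, hv, hw⟩
    · exact ⟨i, k, w, v, h, hw, hv⟩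
  have face : ∀ {u i k v w}, (∀ i, 0 < u i) → MinAt (NSupp f) u v → MinAt (NSupp f) u w →
      JPair i k v w → faceOf u (NDiag f) = segment ℝ (toR v) (toR w) := by
    intro u i k v w hu hv hw hJ
    rw [faceOf_eq hu hv, ← convexHull_pair, ← Set.image_pair]
    congr 2
    ext x
    simp only [Set.mem_ofPred_eq, Set.mem_insert_iff, Set.mem_singleton_iff]
    constructor
    · intro hx
      by_cases hvx : v = x
      · exact .inl hvx.symm
      obtain ⟨i', k', h | h⟩ := classify hA hax hpl hord hu hv hx hvx
      · exact .inr (unique_pair hA hu hu hv hw hv hx hJ h).2.symm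
      · exact .inl (unique_pair hA hu hu hv hw hx hv hJ h).1.symm
    · rintro (rfl | rfl)
      · exact hv
      · exact hw
  obtain ⟨u₁, v₁, w₁, hu₁, hv₁, hw₁, hvw₁⟩ := exists_pair hpl hord
  obtain ⟨i, k, v, w, hJ, hv, hw⟩ := pairs hu₁ hv₁ hw₁ hvw₁
  refine ⟨_, inJ_of_jPair hJ, Set.Subset.antisymm ?_ ?_⟩
  · rintro S ⟨⟨u, hu, rfl⟩, hdim⟩
    obtain ⟨x₀, hx₀, -⟩ := hpl 0
    obtain ⟨a, ha⟩ := exists_minAt ⟨x₀, hx₀⟩ hu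
    obtain ⟨b, hb, hab⟩ : ∃ b, MinAt (NSupp f) u b ∧ a ≠ b := by
      by_contra! h
      have : {w | MinAt (NSupp f) u w} = {a} := by
        ext x
        exact ⟨fun hx => (h x hx).symm, fun hx => by rw [Set.mem_singleton_iff.1 hx]; exact ha⟩
      rw [faceOf_eq hu ha, this, Set.image_singleton, convexHull_singleton,
        faceDim_singleton] at hdim
      exact zero_ne_one hdim
    obtain ⟨i', k', v', w', hJ', hv', hw'⟩ := pairs hu ha hb hab
    obtain ⟨rfl, rfl⟩ := unique_pair hA hu₁ hu hv hw hv' hw' hJ hJ'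
    exact face hu hv' hw' hJ'
  · rintro _ rfl
    exact ⟨⟨u₁, hu₁, (face hu₁ hv hw hJ).symm⟩,
      faceDim_segment fun h => hne hJ (toR_injective h)⟩

/-! ### Taylor coefficients of isolated singularities -/

theorem pder_analytic {f : (Fin 3 → ℂ) → ℂ} {U : Set (Fin 3 → ℂ)} (hf : AnalyticOnNhd ℂ f U)
    (i : Fin 3) : AnalyticOnNhd ℂ (pder i f) U := fun z hz =>
  ((ContinuousLinearMap.apply ℂ ℂ (Pi.single i 1 : Fin 3 → ℂ)).analyticAt _).comp (hf.fderiv z hz)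

theorem pder_iterate_analytic {f : (Fin 3 → ℂ) → ℂ} {U : Set (Fin 3 → ℂ)}
    (hf : AnalyticOnNhd ℂ f U) (i : Fin 3) (m : ℕ) : AnalyticOnNhd ℂ ((pder i)^[m] f) U := by
  induction m with
  | zero => exact hf
  | succ m ih => rw [Function.iterate_succ_apply']; exact pder_analytic ih i

theorem pder_congr {f g : (Fin 3 → ℂ) → ℂ} {U : Set (Fin 3 → ℂ)} (hU : IsOpen U)
    (h : Set.EqOn f g U) (i : Fin 3) : Set.EqOn (pder i f) (pder i g) U := fun z hz => by
  rw [pder, pder, (h.eventuallyEq_of_mem (hU.mem_nhds hz)).fderiv_eq]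

theorem pder_comm {f : (Fin 3 → ℂ) → ℂ} {U : Set (Fin 3 → ℂ)} (hf : AnalyticOnNhd ℂ f U)
    (i j : Fin 3) : Set.EqOn (pder i (pder j f)) (pder j (pder i f)) U := fun z hz => by
  have hd : DifferentiableAt ℂ (fderiv ℂ f) z := (hf.fderiv z hz).differentiableAt
  have key : ∀ a b : Fin 3, pder a (pder b f) z
      = fderiv ℂ (fderiv ℂ f) z (Pi.single a 1) (Pi.single b 1) := by
    intro a b
    have : HasFDerivAt (pder b f) _ z := hd.hasFDerivAt.clm_apply (hasFDerivAt_const _ z)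
    rw [pder, this.fderiv]
    simp
  rw [key, key]
  exact (hf z hz).contDiffAt.isSymmSndFDerivAt_of_omega _ _

theorem pder_iterate_comm {f : (Fin 3 → ℂ) → ℂ} {U : Set (Fin 3 → ℂ)} (hU : IsOpen U)
    (hf : AnalyticOnNhd ℂ f U) (i j : Fin 3) (m : ℕ) :
    Set.EqOn ((pder i)^[m] (pder j f)) (pder j ((pder i)^[m] f)) U := by
  induction m with
  | zero => exact fun z _ => rfl
  | succ m ih =>
    rw [Function.iterate_succ_apply', Function.iterate_succ_apply']
    exact (pder_congr hU ih i).trans (pder_comm (pder_iterate_analytic hf i m) i j)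

theorem hasDerivAt_line {f : (Fin 3 → ℂ) → ℂ} {p : Fin 3 → ℂ} {i : Fin 3} {t : ℂ}
    (hf : AnalyticAt ℂ f (p + t • Pi.single i 1)) :
    HasDerivAt (fun s : ℂ => f (p + s • Pi.single i 1)) (pder i f (p + t • Pi.single i 1)) t := by
  have h1 : HasDerivAt (fun s : ℂ => p + s • (Pi.single i 1 : Fin 3 → ℂ)) (Pi.single i 1) t := by
    simpa using ((hasDerivAt_id t).smul_const (Pi.single i 1 : Fin 3 → ℂ)).const_add p
  exact hf.differentiableAt.hasFDerivAt.comp_hasDerivAt t h1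

theorem iteratedDeriv_line {f : (Fin 3 → ℂ) → ℂ} {U : Set (Fin 3 → ℂ)} (hU : IsOpen U)
    (hf : AnalyticOnNhd ℂ f U) (p : Fin 3 → ℂ) (i : Fin 3) (m : ℕ) :
    ∀ t : ℂ, p + t • Pi.single i 1 ∈ U →
      iteratedDeriv m (fun s : ℂ => f (p + s • Pi.single i 1)) t
        = (pder i)^[m] f (p + t • Pi.single i 1) := by
  induction m with
  | zero => intro t _; simp
  | succ m ih =>
    intro t ht
    have hopen : IsOpen {t : ℂ | p + t • (Pi.single i 1 : Fin 3 → ℂ) ∈ U} :=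
      hU.preimage (by fun_prop)
    have hev : iteratedDeriv m (fun s : ℂ => f (p + s • Pi.single i 1)) =ᶠ[𝓝 t]
        fun s => (pder i)^[m] f (p + s • Pi.single i 1) := by
      filter_upwards [hopen.mem_nhds ht] with s hs using ih s hs
    rw [iteratedDeriv_succ, hev.deriv_eq, Function.iterate_succ_apply']
    exact (hasDerivAt_line (pder_iterate_analytic hf i m _ ht)).deriv

/-- The identity theorem along a line parallel to the `i`-th axis. -/
theorem eq_zero_on_line {f : (Fin 3 → ℂ) → ℂ} {U : Set (Fin 3 → ℂ)} (hU : IsOpen U)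
    (hUc : Convex ℝ U) (hf : AnalyticOnNhd ℂ f U) {p : Fin 3 → ℂ} (hp : p ∈ U) (i : Fin 3)
    (h : ∀ m, (pder i)^[m] f p = 0) (t : ℂ) (ht : p + t • Pi.single i 1 ∈ U) :
    f (p + t • Pi.single i 1) = 0 := by
  set φ : ℂ → ℂ := fun s => f (p + s • Pi.single i 1) with hφ
  set T : Set ℂ := {t : ℂ | p + t • (Pi.single i 1 : Fin 3 → ℂ) ∈ U} with hT
  have hφT : AnalyticOnNhd ℂ φ T := fun s hs =>
    (hf _ hs).comp (f := fun s : ℂ => p + s • (Pi.single i 1 : Fin 3 → ℂ))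
      (analyticAt_const.add (analyticAt_id.smul analyticAt_const))
  have h0 : (0 : ℂ) ∈ T := by simpa [hT] using hp
  have hTc : Convex ℝ T := by
    intro x hx y hy a b ha hb hab
    have := hUc hx hy ha hb hab
    have e : a • (p + x • (Pi.single i 1 : Fin 3 → ℂ)) + b • (p + y • Pi.single i 1)
        = p + (a • x + b • y) • (Pi.single i 1 : Fin 3 → ℂ) := by
      have hp : p = a • p + b • p := by rw [← add_smul, hab, one_smul]
      conv_rhs => rw [hp]
      rw [add_smul, smul_add, smul_add, smul_assoc, smul_assoc]
      abel
    rw [e] at this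
    exact this
  have hev : φ =ᶠ[𝓝 0] 0 := by
    have hs := (hφT 0 h0).hasFPowerSeriesAt
    have hz : (FormalMultilinearSeries.ofScalars ℂ
        (fun n => iteratedDeriv n φ 0 / (n.factorial : ℂ))) = 0 := by
      have : (fun n => iteratedDeriv n φ 0 / (n.factorial : ℂ)) = 0 := by
        funext n
        rw [hφ, iteratedDeriv_line hU hf p i n 0 h0]
        simp [h n]
      rw [this]
      ext n
      simp [FormalMultilinearSeries.ofScalars]
    rw [hz] at hs
    exact hs.eventually_eq_zero
  exact hφT.eqOn_zero_of_preconnected_of_eventuallyEq_zero hTc.isPreconnected h0 hev ht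

theorem mder_single (f : (Fin 3 → ℂ) → ℂ) (i : Fin 3) (m : ℕ) :
    mder (Pi.single i m) f = (pder i)^[m] f := by
  fin_cases i <;> simp [mder, List.finRange_succ]

theorem mder_single_add (f : (Fin 3 → ℂ) → ℂ) {i j : Fin 3} (hij : i ≠ j) (m : ℕ) :
    mder (Pi.single i m + Pi.single j 1) f = (pder i)^[m] (pder j f) ∨
    mder (Pi.single i m + Pi.single j 1) f = pder j ((pder i)^[m] f) := by
  fin_cases i <;> fin_cases j <;> simp_all [mder, List.finRange_succ]

/-- In the coordinate plane spanned by two axes `j < k` no commutation is needed. -/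
theorem mder_single_add_single (f : (Fin 3 → ℂ) → ℂ) {j k : Fin 3} (hjk : j < k) (m n : ℕ) :
    mder (Pi.single j m + Pi.single k n) f = (pder j)^[m] ((pder k)^[n] f) := by
  fin_cases j <;> fin_cases k <;> simp_all [mder, List.finRange_succ]

/-- If no exponent of the support were at distance at most one from the `i`-th axis, all partial
derivatives of `f` would vanish along that axis. -/
theorem near_axis {f : (Fin 3 → ℂ) → ℂ} {r : ℝ} (hr : 0 < r)
    (hf : AnalyticOnNhd ℂ f (Metric.ball 0 r))
    (hiso : ∀ z ∈ Metric.ball (0 : Fin 3 → ℂ) r, z ≠ 0 → ∃ i, pder i f z ≠ 0) (i : Fin 3) :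
    ∃ x ∈ NSupp f, ∑ j ∈ Finset.univ.erase i, x j ≤ 1 := by
  by_contra! h
  have h' : ∀ x : Fin 3 → ℕ, ∑ j ∈ Finset.univ.erase i, x j ≤ 1 → mder x f 0 = 0 := by
    intro x hx
    by_contra hne
    exact absurd (h x hne) (not_lt.2 hx)
  have h0 : (0 : Fin 3 → ℂ) ∈ Metric.ball (0 : Fin 3 → ℂ) r := Metric.mem_ball_self hr
  have hder : ∀ j m, (pder i)^[m] (pder j f) 0 = 0 := by
    intro j m
    by_cases hij : i = j
    · subst hij
      rw [← Function.iterate_succ_apply, ← mder_single]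
      apply h'
      rw [Finset.sum_eq_zero]
      · exact zero_le_one
      · intro l hl
        simp [Finset.ne_of_mem_erase hl]
    · have hs : ∑ l ∈ Finset.univ.erase i, (Pi.single i m + Pi.single j 1 : Fin 3 → ℕ) l ≤ 1 := by
        have hc : ∀ l ∈ Finset.univ.erase i, (Pi.single i m + Pi.single j 1 : Fin 3 → ℕ) l
            = (Pi.single j 1 : Fin 3 → ℕ) l := by
          intro l hl
          simp [Finset.ne_of_mem_erase hl]
        rw [Finset.sum_congr rfl hc]
        refine (Finset.sum_le_sum_of_subset (Finset.erase_subset i _)).trans ?_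
        simp
      have := h' _ hs
      rcases mder_single_add f hij m with e | e
      · rwa [e] at this
      · rw [e] at this
        rw [pder_iterate_comm Metric.isOpen_ball hf i j m h0, this]
  have hmem : (0 : Fin 3 → ℂ) + ((r / 2 : ℝ) : ℂ) • Pi.single i 1 ∈ Metric.ball 0 r := by
    rw [zero_add, mem_ball_zero_iff, norm_smul, Pi.norm_single, norm_one, mul_one,
      Complex.norm_real, Real.norm_of_nonneg (by linarith)]
    linarith
  obtain ⟨j, hj⟩ := hiso _ hmem (by
    intro e
    have := congrFun e i
    simp at this
    exact hr.ne' this)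
  exact hj (eq_zero_on_line Metric.isOpen_ball (convex_ball _ _) (pder_analytic hf j) h0 i
    (hder j) _ hmem)

/-- Zeros of a continuous function of two complex variables that is holomorphic in the first one
are not isolated: otherwise `h(·, t)` has no zeros in a disc while
`|h(0, t)| < |h(s, t)|` on its boundary, contradicting the maximum principle for `1 / h(·, t)`. -/
theorem exists_nonisolated_zero {h : ℂ → ℂ → ℂ} {ρ : ℝ} (hρ : 0 < ρ)
    (hc : ∀ s t : ℂ, ‖s‖ ≤ ρ → ‖t‖ ≤ ρ → ContinuousAt (fun q : ℂ × ℂ => h q.1 q.2) (s, t))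
    (hd : ∀ s t : ℂ, ‖s‖ ≤ ρ → ‖t‖ ≤ ρ → DifferentiableAt ℂ (fun s => h s t) s)
    (h00 : h 0 0 = 0) :
    ∃ s t : ℂ, ‖s‖ ≤ ρ ∧ ‖t‖ ≤ ρ ∧ (s ≠ 0 ∨ t ≠ 0) ∧ h s t = 0 := by
  by_contra! hne
  have hev : ∀ᶠ t in 𝓝 (0 : ℂ), ∀ s ∈ Metric.sphere (0 : ℂ) ρ, ‖h 0 t‖ < ‖h s t‖ := by
    refine (isCompact_sphere _ _).eventually_forall_of_forall_eventually fun s hs => ?_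
    have hsρ : ‖s‖ = ρ := by simpa using hs
    have hs0 : s ≠ 0 := by rintro rfl; simp at hsρ; linarith
    have c1 : ContinuousAt (fun q : ℂ × ℂ => ‖h q.2 q.1‖) (0, s) :=
      ((hc s 0 hsρ.le (by simpa using hρ.le)).comp_of_eq (f := Prod.swap)
        continuous_swap.continuousAt rfl).norm
    have c2 : ContinuousAt (fun q : ℂ × ℂ => ‖h 0 q.1‖) (0, s) :=
      ((hc 0 0 (by simpa using hρ.le) (by simpa using hρ.le)).comp_of_eq
        (f := fun q : ℂ × ℂ => ((0 : ℂ), q.1)) (by fun_prop) rfl).norm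
    refine (c2.eventually_lt c1 ?_)
    simpa [h00] using hne s 0 hsρ.le (by simpa using hρ.le) (.inl hs0)
  obtain ⟨ε, hε, hball⟩ := Metric.eventually_nhds_iff.1 hev
  set τ : ℝ := min (ε / 2) ρ with hτ
  have hτ0 : 0 < τ := lt_min (by linarith) hρ
  have hτn : ‖(τ : ℂ)‖ = τ := by rw [Complex.norm_real, Real.norm_of_nonneg hτ0.le]
  have hτρ : ‖(τ : ℂ)‖ ≤ ρ := hτn.le.trans (min_le_right _ _)
  have hlt := hball (y := (τ : ℂ)) (by
    rw [dist_zero_right, hτn]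
    exact (min_le_left _ _).trans_lt (by linarith))
  have hnz : ∀ s : ℂ, ‖s‖ ≤ ρ → h s τ ≠ 0 := fun s hs =>
    hne s τ hs hτρ (.inr (by exact_mod_cast hτ0.ne'))
  have hdiff : DifferentiableOn ℂ (fun s => (h s τ)⁻¹) (Metric.closedBall 0 ρ) := fun s hs => by
    have hs' : ‖s‖ ≤ ρ := by simpa using hs
    exact ((hd s τ hs' hτρ).inv (hnz s hs')).differentiableWithinAt
  have hdcl : DiffContOnCl ℂ (fun s => (h s τ)⁻¹) (Metric.ball 0 ρ) :=
    DifferentiableOn.diffContOnCl (by rwa [closure_ball _ hρ.ne'])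
  obtain ⟨z, hz, hmax⟩ := Complex.exists_mem_frontier_isMaxOn_norm Metric.isBounded_ball
    ⟨0, Metric.mem_ball_self hρ⟩ hdcl
  rw [frontier_ball _ hρ.ne'] at hz
  have h1 := hmax (subset_closure (Metric.mem_ball_self hρ))
  simp only [Set.mem_ofPred_eq, Function.comp_apply, norm_inv] at h1
  have h2 := inv_strictAnti₀ (norm_pos_iff.2 (hnz 0 (by simpa using hρ.le))) (hlt z hz)
  exact absurd h1 (not_le.2 h2)

/-- If the support misses the plane `νᵢ = 0`, then `f` vanishes on `zᵢ = 0`, so there `∇f` reduces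
to the single function `∂ᵢf` of two variables, whose zeros are not isolated. -/
theorem meets_plane {f : (Fin 3 → ℂ) → ℂ} {r : ℝ} (hr : 0 < r)
    (hf : AnalyticOnNhd ℂ f (Metric.ball 0 r)) (hf0 : ∀ i, pder i f 0 = 0)
    (hiso : ∀ z ∈ Metric.ball (0 : Fin 3 → ℂ) r, z ≠ 0 → ∃ i, pder i f z ≠ 0) (i : Fin 3) :
    ∃ x ∈ NSupp f, x i = 0 := by
  by_contra! h
  have h' : ∀ x : Fin 3 → ℕ, x i = 0 → mder x f 0 = 0 := by
    intro x hx
    by_contra hne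
    exact h x hne hx
  have h0 : (0 : Fin 3 → ℂ) ∈ Metric.ball (0 : Fin 3 → ℂ) r := Metric.mem_ball_self hr
  obtain ⟨j, k, hjk, hij, hik⟩ : ∃ j k : Fin 3, j < k ∧ i ≠ j ∧ i ≠ k := by
    clear * -
    revert i; decide
  have hpl : ∀ s t : ℂ, ((0 : Fin 3 → ℂ) + s • Pi.single j 1) + t • Pi.single k 1 ∈
      Metric.ball (0 : Fin 3 → ℂ) r ↔ ‖s‖ < r ∧ ‖t‖ < r := by
    intro s t
    rw [zero_add, mem_ball_zero_iff, pi_norm_lt_iff hr]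
    constructor
    · intro hl
      exact ⟨by simpa [hjk.ne] using hl j, by simpa [hjk.ne'] using hl k⟩
    · rintro ⟨hs, ht⟩ l
      rcases eq_of_distinct hij hik hjk.ne l with rfl | rfl | rfl
      · simpa [hij, hik] using hr
      · simpa [hjk.ne] using hs
      · simpa [hjk.ne'] using ht
  have hline : ∀ (s : ℂ), ‖s‖ < r → ∀ n,
      (pder k)^[n] f ((0 : Fin 3 → ℂ) + s • Pi.single j 1) = 0 := by
    intro s hs n
    refine eq_zero_on_line Metric.isOpen_ball (convex_ball _ _) (pder_iterate_analytic hf k n) h0 j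
      (fun m => ?_) s ?_
    · rw [← mder_single_add_single f hjk]
      exact h' _ (by simp [hij, hik])
    · simpa using (hpl s 0).2 ⟨hs, by simpa using hr⟩
  have hzero : ∀ s t : ℂ, ‖s‖ < r → ‖t‖ < r →
      f (((0 : Fin 3 → ℂ) + s • Pi.single j 1) + t • Pi.single k 1) = 0 := by
    intro s t hs ht
    refine eq_zero_on_line Metric.isOpen_ball (convex_ball _ _) hf ?_ k (hline s hs) t
      ((hpl s t).2 ⟨hs, ht⟩)
    simpa using (hpl s 0).2 ⟨hs, by simpa using hr⟩
  have hnear : ∀ s : ℂ, ‖s‖ < r → ∀ᶠ s' in 𝓝 s, ‖s'‖ < r := fun s hs =>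
    continuous_norm.continuousAt.eventually_lt continuousAt_const hs
  have hk0 : ∀ s t : ℂ, ‖s‖ < r → ‖t‖ < r →
      pder k f (((0 : Fin 3 → ℂ) + s • Pi.single j 1) + t • Pi.single k 1) = 0 := by
    intro s t hs ht
    have hd := hasDerivAt_line (hf _ ((hpl s t).2 ⟨hs, ht⟩))
    refine hd.unique ((hasDerivAt_const t (0 : ℂ)).congr_of_eventuallyEq ?_)
    filter_upwards [hnear t ht] with t' ht' using hzero s t' hs ht'
  have hj0 : ∀ s t : ℂ, ‖s‖ < r → ‖t‖ < r →
      pder j f (((0 : Fin 3 → ℂ) + s • Pi.single j 1) + t • Pi.single k 1) = 0 := by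
    intro s t hs ht
    have hmem := (hpl s t).2 ⟨hs, ht⟩
    rw [add_right_comm] at hmem ⊢
    refine (hasDerivAt_line (hf _ hmem)).unique
      ((hasDerivAt_const s (0 : ℂ)).congr_of_eventuallyEq ?_)
    filter_upwards [hnear s hs] with s' hs'
    rw [add_right_comm]
    exact hzero s' t hs' ht
  have hA : ∀ s t : ℂ, ‖s‖ ≤ r / 2 → ‖t‖ ≤ r / 2 → AnalyticAt ℂ (pder i f)
      (((0 : Fin 3 → ℂ) + s • Pi.single j 1) + t • Pi.single k 1) := fun s t hs ht =>
    pder_analytic hf i _ ((hpl s t).2 ⟨by linarith, by linarith⟩)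
  obtain ⟨s, t, hs, ht, hst, hz⟩ := exists_nonisolated_zero (ρ := r / 2)
    (h := fun s t => pder i f (((0 : Fin 3 → ℂ) + s • Pi.single j 1) + t • Pi.single k 1))
    (by linarith)
    (fun s t hs ht => (hA s t hs ht).continuousAt.comp_of_eq
      (f := fun q : ℂ × ℂ => ((0 : Fin 3 → ℂ) + q.1 • Pi.single j 1) + q.2 • Pi.single k 1)
      (by fun_prop) rfl)
    (fun s t hs ht => (hA s t hs ht).differentiableAt.comp s
      (f := fun s : ℂ => ((0 : Fin 3 → ℂ) + s • Pi.single j 1) + t • Pi.single k 1)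
      (by fun_prop))
    (by simpa using hf0 i)
  have hs' : ‖s‖ < r := by linarith
  have ht' : ‖t‖ < r := by linarith
  obtain ⟨l, hl⟩ := hiso _ ((hpl s t).2 ⟨hs', ht'⟩) (by
    intro e
    have ej := congrFun e j
    have ek := congrFun e k
    simp [hjk.ne, hjk.ne'] at ej ek
    rcases hst with h | h
    · exact h ej
    · exact h ek)
  rcases eq_of_distinct hij hik hjk.ne l with rfl | rfl | rfl
  · exact hl hz
  · exact hl (hj0 s t hs' ht')
  · exact hl (hk0 s t hs' ht')

/-- A critical point at `0` with value `0` has no Taylor terms of degree less than two. -/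
theorem two_le_order {f : (Fin 3 → ℂ) → ℂ} (hf : f 0 = 0) (hf0 : ∀ i, pder i f 0 = 0) :
    ∀ x ∈ NSupp f, 2 ≤ ∑ i, x i := by
  intro x hx
  by_contra hlt
  have hcase : x = Pi.single 0 0 ∨ ∃ i, x = Pi.single i 1 := by
    rw [Fin.sum_univ_three] at hlt
    have : (x 0 = 0 ∧ x 1 = 0 ∧ x 2 = 0) ∨ (x 0 = 1 ∧ x 1 = 0 ∧ x 2 = 0) ∨
      (x 0 = 0 ∧ x 1 = 1 ∧ x 2 = 0) ∨ (x 0 = 0 ∧ x 1 = 0 ∧ x 2 = 1) := by omega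
    rcases this with h | h | h | h
    · left; ext l; fin_cases l <;> simp [h]
    · right; use 0; ext l; fin_cases l <;> simp [h]
    · right; use 1; ext l; fin_cases l <;> simp [h]
    · right; use 2; ext l; fin_cases l <;> simp [h]
  rcases hcase with rfl | ⟨i, rfl⟩
  · exact hx (by rw [mder_single]; simpa using hf)
  · exact hx (by rw [mder_single]; simpa using hf0 i)

/-- if an isolated singularity `f ∈ 𝒪₃` has no 2-dimensional compact faces,
then `Γ¹(f)` consists of exactly one segment, and this segment belongs to `𝒥`. -/
theorem stmt14 (f : (Fin 3 → ℂ) → ℂ) (hf : IsIsolSing f) (h2 : GammaK f 2 = ∅) :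
    ∃ I, InJ I ∧ GammaK f 1 = {I} := by
  obtain ⟨⟨hfa, -, hf0, hgrad⟩, r₁, hr₁, hiso⟩ := hf
  obtain ⟨r₂, hr₂, hball⟩ := Metric.eventually_nhds_iff_ball.1 hfa.eventually_analyticAt
  have hr : 0 < min r₁ r₂ := lt_min hr₁ hr₂
  have hf : AnalyticOnNhd ℂ f (Metric.ball 0 (min r₁ r₂)) := fun z hz =>
    hball z (Metric.ball_subset_ball (min_le_right _ _) hz)
  have hiso' : ∀ z ∈ Metric.ball (0 : Fin 3 → ℂ) (min r₁ r₂), z ≠ 0 → ∃ i, pder i f z ≠ 0 :=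
    fun z hz => hiso z ((mem_ball_zero_iff.1 hz).trans_le (min_le_left _ _))
  exact gamma_one_of_support h2 (near_axis hr hf hiso') (meets_plane hr hf hgrad hiso')
    (two_le_order hf0 hgrad)
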